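/- Let a, b, θ be integers with 2 ≤ θ ≤ min(a,b)−1. For p ∈ [0,1] define x_0(p) = y_0(p) = p and, for t ≥ 1, x_t(p) = φ_{a,p,θ}(y_{t−1}(p)) and y_t(p) = φ_{b,p,θ}(x_{t−1}(p)), with limits x_∞(p) and y_∞(p). Then there exists p_f ∈ (0,1) such that for every p with p_f < p ≤ 1 one has x_∞(p) = 1 and y_∞(p) = 1, and for every p with 0 ≤ p < p_f one has x_∞(p) < 1 and y_∞(p) < 1. Moreover, if a ≤ b and p_a, p_b ∈ (0,1) denote the critical values of the one-dimensional iterations s_t = φ_{a,p,θ}(s_{t−1}) and S_t = φ_{b,p,θ}(S_{t−1}) with s_0 = S_0 = p (i.e., the limit of the iteration equals 1 for p above the critical value and is < 1 below it), then p_b ≤ p_f ≤ p_a. -/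

import Mathlib

/-- `φ_{n,p,θ}(x) = p + (1-p) * ∑_{k=θ}^{n} C(n,k) x^k (1-x)^{n-k}`. -/
noncomputable def phiBP (n θ : ℕ) (p x : ℝ) : ℝ :=
  p + (1 - p) * ∑ k ∈ Finset.Icc θ n, (n.choose k : ℝ) * x ^ k * (1 - x) ^ (n - k)

/-- The pair `(x_t, y_t)` of the coupled iteration
`x_0 = y_0 = p`, `x_t = φ_{a,p,θ}(y_{t-1})`, `y_t = φ_{b,p,θ}(x_{t-1})`. -/
noncomputable def xyBP (a b θ : ℕ) (p : ℝ) : ℕ → ℝ × ℝ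
  | 0 => (p, p)
  | t + 1 => (phiBP a θ p (xyBP a b θ p t).2, phiBP b θ p (xyBP a b θ p t).1)

/-- `x_t`. -/
noncomputable def xBP (a b θ : ℕ) (p : ℝ) (t : ℕ) : ℝ := (xyBP a b θ p t).1

/-- `y_t`. -/
noncomputable def yBP (a b θ : ℕ) (p : ℝ) (t : ℕ) : ℝ := (xyBP a b θ p t).2

/-- The one-dimensional iteration `s_0 = p`, `s_t = φ_{n,p,θ}(s_{t-1})`. -/
noncomputable def sBP (n θ : ℕ) (p : ℝ) : ℕ → ℝ
  | 0 => p
  | t + 1 => phiBP n θ p (sBP n θ p t)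

/-- `pc` is a critical value for the one-dimensional iteration `s_t` on the tree with
in-degree `n`: above `pc` the limit of the iteration is `1`, below `pc` it is `< 1`. -/
def IsCritBP (n θ : ℕ) (pc : ℝ) : Prop :=
  (∀ p : ℝ, pc < p → p ≤ 1 → Filter.Tendsto (sBP n θ p) Filter.atTop (nhds 1)) ∧
  (∀ p : ℝ, 0 ≤ p → p < pc → ∃ L : ℝ, L < 1 ∧ Filter.Tendsto (sBP n θ p) Filter.atTop (nhds L))

/-- Binomial upper tail, defined by the Pascal recursion. -/
noncomputable def tailBP : ℕ → ℕ → ℝ → ℝ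
  | _, 0, _ => 1
  | 0, _ + 1, _ => 0
  | n + 1, k + 1, x => x * tailBP n k x + (1 - x) * tailBP n (k + 1) x

theorem tailBP_zero (n : ℕ) (x : ℝ) : tailBP n 0 x = 1 := by
  cases n <;> simp [tailBP]

theorem tailBP_of_lt (n : ℕ) : ∀ (k : ℕ) (x : ℝ), n < k → tailBP n k x = 0 := by
  induction n with
  | zero =>
    intro k x h
    obtain ⟨k, rfl⟩ : ∃ j, k = j + 1 := ⟨k - 1, by omega⟩
    simp [tailBP]
  | succ n ih =>
    intro k x h
    obtain ⟨k, rfl⟩ : ∃ j, k = j + 1 := ⟨k - 1, by omega⟩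
    simp only [tailBP]
    rw [ih k x (by omega), ih (k + 1) x (by omega)]
    ring

theorem tailBP_sub (n : ℕ) : ∀ (k : ℕ) (x : ℝ),
    (n.choose k : ℝ) * x ^ k * (1 - x) ^ (n - k) = tailBP n k x - tailBP n (k + 1) x := by
  induction n with
  | zero =>
    intro k x
    cases k <;> simp [tailBP]
  | succ n ih =>
    intro k x
    cases k with
    | zero =>
      have h := ih 0 x
      simp [tailBP, tailBP_zero] at h ⊢
      rw [pow_succ, h]; ring
    | succ k =>
      simp only [tailBP]
      have h1 := ih k x
      have h2 := ih (k + 1) x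
      have e : x * tailBP n k x + (1 - x) * tailBP n (k + 1) x -
          (x * tailBP n (k + 1) x + (1 - x) * tailBP n (k + 1 + 1) x)
          = x * (tailBP n k x - tailBP n (k + 1) x)
            + (1 - x) * (tailBP n (k + 1) x - tailBP n (k + 1 + 1) x) := by ring
      rw [e, ← h1, ← h2, Nat.choose_succ_succ, Nat.add_sub_add_right]
      push_cast
      rw [Nat.succ_eq_add_one]
      rcases Nat.lt_or_ge k n with hk | hk
      · obtain ⟨m, rfl⟩ : ∃ m, n = k + 1 + m := ⟨n - (k + 1), by omega⟩
        have e1 : k + 1 + m - k = m + 1 := by omega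
        have e2 : k + 1 + m - (k + 1) = m := by omega
        rw [e1, e2]; ring
      · rw [Nat.choose_eq_zero_of_lt (show n < k + 1 by omega)]
        push_cast; ring

theorem sum_eq_tailBP (n k : ℕ) (x : ℝ) (hk : k ≤ n) :
    ∑ j ∈ Finset.Icc k n, (n.choose j : ℝ) * x ^ j * (1 - x) ^ (n - j) = tailBP n k x := by
  have key : ∀ m, k ≤ m → ∑ j ∈ Finset.Ico k m,
      (n.choose j : ℝ) * x ^ j * (1 - x) ^ (n - j) = tailBP n k x - tailBP n m x := by
    intro m hm
    induction m, hm using Nat.le_induction with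
    | base => simp
    | succ m hm ih => rw [Finset.sum_Ico_succ_top hm, ih, tailBP_sub]; ring
  have h := key (n + 1) (by omega)
  rw [tailBP_of_lt n (n + 1) x (by omega), sub_zero] at h
  rw [← h]
  congr 1

theorem tailBP_sub_nonneg (n k : ℕ) {x : ℝ} (h0 : 0 ≤ x) (h1 : x ≤ 1) :
    tailBP n (k + 1) x ≤ tailBP n k x := by
  have h := tailBP_sub n k x
  have : 0 ≤ (n.choose k : ℝ) * x ^ k * (1 - x) ^ (n - k) := by
    have : 0 ≤ 1 - x := by linarith
    positivity
  linarith

theorem tailBP_nonneg (n k : ℕ) {x : ℝ} (h0 : 0 ≤ x) (h1 : x ≤ 1) : 0 ≤ tailBP n k x := by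
  induction n generalizing k with
  | zero => cases k <;> simp [tailBP]
  | succ n ih =>
    cases k with
    | zero => simp [tailBP]
    | succ k =>
      simp only [tailBP]
      have := mul_nonneg h0 (ih k)
      have := mul_nonneg (sub_nonneg.2 h1) (ih (k + 1))
      linarith

theorem tailBP_le_one (n k : ℕ) {x : ℝ} (h0 : 0 ≤ x) (h1 : x ≤ 1) : tailBP n k x ≤ 1 := by
  induction k with
  | zero => rw [tailBP_zero]
  | succ k ih => exact (tailBP_sub_nonneg n k h0 h1).trans ih

theorem tailBP_mono (n k : ℕ) {x y : ℝ} (h0 : 0 ≤ x) (hxy : x ≤ y) (h1 : y ≤ 1) :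
    tailBP n k x ≤ tailBP n k y := by
  induction n generalizing k with
  | zero => cases k <;> simp [tailBP]
  | succ n ih =>
    cases k with
    | zero => simp [tailBP]
    | succ k =>
      simp only [tailBP]
      have a1 := mul_le_mul_of_nonneg_left (ih k) h0
      have a2 := mul_le_mul_of_nonneg_left (ih (k + 1)) (show 0 ≤ 1 - x by linarith)
      have a3 := mul_nonneg (sub_nonneg.2 hxy)
        (sub_nonneg.2 (tailBP_sub_nonneg n k (h0.trans hxy) h1))
      nlinarith

theorem tailBP_mono_n {m n : ℕ} (k : ℕ) (hmn : m ≤ n) {x : ℝ} (h0 : 0 ≤ x) (h1 : x ≤ 1) :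
    tailBP m k x ≤ tailBP n k x := by
  induction n, hmn using Nat.le_induction with
  | base => exact le_rfl
  | succ n hn ih =>
    refine ih.trans ?_
    cases k with
    | zero => simp [tailBP_zero]
    | succ k =>
      simp only [tailBP]
      have := mul_nonneg h0 (sub_nonneg.2 (tailBP_sub_nonneg n k h0 h1))
      linarith

theorem tailBP_le_lin (n k : ℕ) {x : ℝ} (h0 : 0 ≤ x) (h1 : x ≤ 1) :
    tailBP n (k + 1) x ≤ n * x := by
  induction n with
  | zero => simp [tailBP]
  | succ n ih =>
    simp only [tailBP]
    have a1 := mul_le_mul_of_nonneg_left (tailBP_le_one n k h0 h1) h0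
    have a2 := mul_nonneg h0 (tailBP_nonneg n (k + 1) h0 h1)
    push_cast
    linarith

theorem tailBP_le_sq (n k : ℕ) {x : ℝ} (h0 : 0 ≤ x) (h1 : x ≤ 1) :
    tailBP n (k + 2) x ≤ (n : ℝ) ^ 2 * x ^ 2 := by
  induction n with
  | zero => simp [tailBP]
  | succ n ih =>
    simp only [tailBP]
    have a1 := mul_le_mul_of_nonneg_left (tailBP_le_lin n k h0 h1) h0
    have a2 := mul_nonneg h0 (tailBP_nonneg n (k + 2) h0 h1)
    have a3 : 0 ≤ (n + 1 : ℝ) * x ^ 2 := by positivity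
    push_cast
    have e : k + 1 + 1 = k + 2 := rfl
    rw [e]
    nlinarith

theorem one_sub_tailBP_le (n k : ℕ) (hk : k ≤ n) {x : ℝ} (h0 : 0 ≤ x) (h1 : x ≤ 1) :
    1 - tailBP n k x ≤ n * (1 - x) := by
  induction n generalizing k with
  | zero =>
    obtain rfl : k = 0 := by omega
    simp [tailBP]
  | succ n ih =>
    cases k with
    | zero =>
      simp only [tailBP, sub_self]
      exact mul_nonneg (by positivity) (by linarith)
    | succ k =>
      simp only [tailBP]
      have a0 := ih k (by omega)
      have a1 := tailBP_le_one n k h0 h1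
      have a2 := mul_nonneg (sub_nonneg.2 h1) (tailBP_nonneg n (k + 1) h0 h1)
      have a3 := mul_nonneg (sub_nonneg.2 h1) (sub_nonneg.2 a1)
      push_cast
      nlinarith

theorem phiBP_eq {n θ : ℕ} (h : θ ≤ n) (p x : ℝ) :
    phiBP n θ p x = p + (1 - p) * tailBP n θ x := by
  rw [phiBP, sum_eq_tailBP n θ x h]

theorem phiBP_mono {m n θ : ℕ} (hm : θ ≤ m) (hmn : m ≤ n) {p q x y : ℝ} (hpq : p ≤ q)
    (hq : q ≤ 1) (h0 : 0 ≤ x) (hxy : x ≤ y) (h1 : y ≤ 1) :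
    phiBP m θ p x ≤ phiBP n θ q y := by
  rw [phiBP_eq hm, phiBP_eq (hm.trans hmn)]
  have b1 := (tailBP_mono m θ h0 hxy h1).trans (tailBP_mono_n θ hmn (h0.trans hxy) h1)
  have b2 := tailBP_le_one n θ (h0.trans hxy) h1
  have b3 := mul_le_mul_of_nonneg_left b1 (show 0 ≤ 1 - p by linarith)
  have b4 := mul_nonneg (sub_nonneg.2 hpq) (sub_nonneg.2 b2)
  nlinarith

theorem le_phiBP {n θ : ℕ} (h : θ ≤ n) {p x : ℝ} (hp : p ≤ 1) (h0 : 0 ≤ x) (h1 : x ≤ 1) :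
    p ≤ phiBP n θ p x := by
  rw [phiBP_eq h]
  have := mul_nonneg (sub_nonneg.2 hp) (tailBP_nonneg n θ h0 h1)
  linarith

theorem phiBP_le_one {n θ : ℕ} (h : θ ≤ n) {p x : ℝ} (hp : p ≤ 1) (h0 : 0 ≤ x) (h1 : x ≤ 1) :
    phiBP n θ p x ≤ 1 := by
  rw [phiBP_eq h]
  have := mul_nonneg (sub_nonneg.2 hp) (sub_nonneg.2 (tailBP_le_one n θ h0 h1))
  linarith

theorem phiBP_one {n θ : ℕ} (h : θ ≤ n) (p : ℝ) : phiBP n θ p 1 = 1 := by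
  rw [phiBP_eq h]
  have h1 := one_sub_tailBP_le n θ h (x := 1) (by norm_num) le_rfl
  have h2 := tailBP_le_one n θ (x := 1) (by norm_num) le_rfl
  have : tailBP n θ 1 = 1 := by
    simp at h1; linarith
  rw [this]; ring

theorem phiBP_continuous (n θ : ℕ) (p : ℝ) : Continuous (phiBP n θ p) := by
  unfold phiBP
  fun_prop

section iter
variable {a b θ : ℕ}

theorem xBP_succ (p : ℝ) (t : ℕ) : xBP a b θ p (t + 1) = phiBP a θ p (yBP a b θ p t) := rfl
theorem yBP_succ (p : ℝ) (t : ℕ) : yBP a b θ p (t + 1) = phiBP b θ p (xBP a b θ p t) := rfl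
theorem xBP_zero (p : ℝ) : xBP a b θ p 0 = p := rfl
theorem yBP_zero (p : ℝ) : yBP a b θ p 0 = p := rfl

theorem xyBP_mem (ha : θ ≤ a) (hb : θ ≤ b) {p : ℝ} (h0 : 0 ≤ p) (h1 : p ≤ 1) (t : ℕ) :
    (0 ≤ xBP a b θ p t ∧ xBP a b θ p t ≤ 1) ∧ (0 ≤ yBP a b θ p t ∧ yBP a b θ p t ≤ 1) := by
  induction t with
  | zero => exact ⟨⟨h0, h1⟩, ⟨h0, h1⟩⟩
  | succ t ih =>
    obtain ⟨⟨x0, x1⟩, ⟨y0, y1⟩⟩ := ih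
    rw [xBP_succ, yBP_succ]
    exact ⟨⟨h0.trans (le_phiBP ha h1 y0 y1), phiBP_le_one ha h1 y0 y1⟩,
      ⟨h0.trans (le_phiBP hb h1 x0 x1), phiBP_le_one hb h1 x0 x1⟩⟩

theorem xyBP_step (ha : θ ≤ a) (hb : θ ≤ b) {p : ℝ} (h0 : 0 ≤ p) (h1 : p ≤ 1) (t : ℕ) :
    xBP a b θ p t ≤ xBP a b θ p (t + 1) ∧ yBP a b θ p t ≤ yBP a b θ p (t + 1) := by
  induction t with
  | zero => exact ⟨le_phiBP ha h1 h0 h1, le_phiBP hb h1 h0 h1⟩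
  | succ t ih =>
    have m := xyBP_mem ha hb h0 h1 t
    have m' := xyBP_mem ha hb h0 h1 (t + 1)
    exact ⟨phiBP_mono ha le_rfl le_rfl h1 m.2.1 ih.2 m'.2.2,
      phiBP_mono hb le_rfl le_rfl h1 m.1.1 ih.1 m'.1.2⟩

theorem xyBP_mono_p (ha : θ ≤ a) (hb : θ ≤ b) {p q : ℝ} (h0 : 0 ≤ p) (hpq : p ≤ q) (h1 : q ≤ 1)
    (t : ℕ) : xBP a b θ p t ≤ xBP a b θ q t ∧ yBP a b θ p t ≤ yBP a b θ q t := by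
  induction t with
  | zero => exact ⟨hpq, hpq⟩
  | succ t ih =>
    have m := xyBP_mem ha hb h0 (hpq.trans h1) t
    have m' := xyBP_mem ha hb (h0.trans hpq) h1 t
    exact ⟨phiBP_mono ha le_rfl hpq h1 m.2.1 ih.2 m'.2.2,
      phiBP_mono hb le_rfl hpq h1 m.1.1 ih.1 m'.1.2⟩

theorem sBP_mem (ha : θ ≤ a) {p : ℝ} (h0 : 0 ≤ p) (h1 : p ≤ 1) (t : ℕ) :
    0 ≤ sBP a θ p t ∧ sBP a θ p t ≤ 1 := by
  induction t with
  | zero => exact ⟨h0, h1⟩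
  | succ t ih =>
    exact ⟨h0.trans (le_phiBP ha h1 ih.1 ih.2), phiBP_le_one ha h1 ih.1 ih.2⟩

theorem sBP_le (ha : θ ≤ a) (hab : a ≤ b) {p : ℝ} (h0 : 0 ≤ p) (h1 : p ≤ 1) (t : ℕ) :
    (sBP a θ p t ≤ xBP a b θ p t ∧ sBP a θ p t ≤ yBP a b θ p t) ∧
    (xBP a b θ p t ≤ sBP b θ p t ∧ yBP a b θ p t ≤ sBP b θ p t) := by
  induction t with
  | zero => exact ⟨⟨le_rfl, le_rfl⟩, ⟨le_rfl, le_rfl⟩⟩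
  | succ t ih =>
    have m := xyBP_mem ha (ha.trans hab) h0 h1 t
    have s := sBP_mem ha h0 h1 t
    have s' := sBP_mem (ha.trans hab) h0 h1 t
    exact ⟨⟨phiBP_mono ha le_rfl le_rfl h1 s.1 ih.1.2 m.2.2,
      phiBP_mono ha hab le_rfl h1 s.1 ih.1.1 m.1.2⟩,
      ⟨phiBP_mono ha hab le_rfl h1 m.2.1 ih.2.2 s'.2,
      phiBP_mono (ha.trans hab) le_rfl le_rfl h1 m.1.1 ih.2.1 s'.2⟩⟩

theorem xyBP_lim (ha : θ ≤ a) (hb : θ ≤ b) {p : ℝ} (h0 : 0 ≤ p) (h1 : p ≤ 1) :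
    ∃ X Y : ℝ, 0 ≤ X ∧ X ≤ 1 ∧ 0 ≤ Y ∧ Y ≤ 1 ∧
      Filter.Tendsto (xBP a b θ p) Filter.atTop (nhds X) ∧
      Filter.Tendsto (yBP a b θ p) Filter.atTop (nhds Y) ∧
      X = phiBP a θ p Y ∧ Y = phiBP b θ p X := by
  have m := xyBP_mem ha hb h0 h1
  have hx := tendsto_atTop_ciSup (monotone_nat_of_le_succ fun t => (xyBP_step ha hb h0 h1 t).1)
    ⟨1, by rintro _ ⟨t, rfl⟩; exact (m t).1.2⟩
  have hy := tendsto_atTop_ciSup (monotone_nat_of_le_succ fun t => (xyBP_step ha hb h0 h1 t).2)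
    ⟨1, by rintro _ ⟨t, rfl⟩; exact (m t).2.2⟩
  refine ⟨_, _, ge_of_tendsto' hx fun t => (m t).1.1, le_of_tendsto' hx fun t => (m t).1.2,
    ge_of_tendsto' hy fun t => (m t).2.1, le_of_tendsto' hy fun t => (m t).2.2, hx, hy, ?_, ?_⟩
  · exact tendsto_nhds_unique (hx.comp (Filter.tendsto_add_atTop_nat 1))
      (((phiBP_continuous a θ p).tendsto _).comp hy)
  · exact tendsto_nhds_unique (hy.comp (Filter.tendsto_add_atTop_nat 1))
      (((phiBP_continuous b θ p).tendsto _).comp hx)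

theorem phiBP_small {n N : ℕ} (hθ : 2 ≤ θ) (hn : θ ≤ n) (hN : n ≤ N) {p x ε : ℝ}
    (hε : 4 * (N : ℝ) ^ 2 * ε = 1) (hp0 : 0 ≤ p) (hp : p ≤ ε) (hε0 : 0 < ε)
    (h2 : 2 * ε ≤ 1) (h0 : 0 ≤ x) (hx : x ≤ 2 * ε) : phiBP n θ p x ≤ 2 * ε := by
  rw [phiBP_eq hn]
  obtain ⟨k, rfl⟩ : ∃ k, θ = k + 2 := ⟨θ - 2, by omega⟩
  have h1 : x ≤ 1 := hx.trans h2
  have c1 := tailBP_le_sq n k h0 h1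
  have c2 := tailBP_nonneg n (k + 2) h0 h1
  have c3 : (n : ℝ) ^ 2 * x ^ 2 ≤ (N : ℝ) ^ 2 * (2 * ε) ^ 2 := by gcongr
  have c4 : (N : ℝ) ^ 2 * (2 * ε) ^ 2 = ε := by
    linear_combination ε * hε
  have c5 := mul_nonneg hp0 c2
  linarith

theorem xyBP_small {N : ℕ} (hθ : 2 ≤ θ) (ha : θ ≤ a) (hb : θ ≤ b) (haN : a ≤ N) (hbN : b ≤ N)
    {p ε : ℝ} (hε : 4 * (N : ℝ) ^ 2 * ε = 1) (hp0 : 0 ≤ p) (hp : p ≤ ε) (hε0 : 0 < ε)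
    (h2 : 2 * ε ≤ 1) (t : ℕ) : xBP a b θ p t ≤ 2 * ε ∧ yBP a b θ p t ≤ 2 * ε := by
  induction t with
  | zero => rw [xBP_zero, yBP_zero]; constructor <;> linarith
  | succ t ih =>
    have m := xyBP_mem ha hb hp0 (show p ≤ 1 by linarith) t
    exact ⟨phiBP_small hθ ha haN hε hp0 hp hε0 h2 m.2.1 ih.2,
      phiBP_small hθ hb hbN hε hp0 hp hε0 h2 m.1.1 ih.1⟩

theorem one_sub_phiBP_le {n N : ℕ} (hn : θ ≤ n) (hN : n ≤ N) {p x : ℝ}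
    (hp : 2 * (N : ℝ) * (1 - p) = 1) (hp1 : p ≤ 1) (h0 : 0 ≤ x) (h1 : x ≤ 1) :
    2 * (1 - phiBP n θ p x) ≤ 1 - x := by
  rw [phiBP_eq hn]
  have c1 := one_sub_tailBP_le n θ hn h0 h1
  have c2 : (n : ℝ) * (1 - x) ≤ N * (1 - x) :=
    mul_le_mul_of_nonneg_right (by exact_mod_cast hN) (by linarith)
  have c3 := mul_le_mul_of_nonneg_left (c1.trans c2) (show 0 ≤ 2 * (1 - p) by linarith)
  have c4 : 2 * (1 - p) * ((N : ℝ) * (1 - x)) = 1 - x := by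
    linear_combination (1 - x) * hp
  linarith

end iter

theorem stmt_19 (a b θ : ℕ) (hθ : 2 ≤ θ) (hθa : θ < a) (hθb : θ < b) :
    ∃ pf : ℝ, 0 < pf ∧ pf < 1 ∧
      (∀ p : ℝ, pf < p → p ≤ 1 →
        Filter.Tendsto (xBP a b θ p) Filter.atTop (nhds 1) ∧
        Filter.Tendsto (yBP a b θ p) Filter.atTop (nhds 1)) ∧
      (∀ p : ℝ, 0 ≤ p → p < pf →
        (∃ xL : ℝ, xL < 1 ∧ Filter.Tendsto (xBP a b θ p) Filter.atTop (nhds xL)) ∧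
        (∃ yL : ℝ, yL < 1 ∧ Filter.Tendsto (yBP a b θ p) Filter.atTop (nhds yL))) ∧
      (a ≤ b → ∀ pa pb : ℝ, 0 < pa → pa < 1 → 0 < pb → pb < 1 →
        IsCritBP a θ pa → IsCritBP b θ pb → pb ≤ pf ∧ pf ≤ pa) := by
  have ha := hθa.le
  have hb := hθb.le
  set S : Set ℝ := {p | 0 ≤ p ∧ p ≤ 1 ∧
    Filter.Tendsto (xBP a b θ p) Filter.atTop (nhds 1) ∧
    Filter.Tendsto (yBP a b θ p) Filter.atTop (nhds 1)} with hS
  set N := a + b with hN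
  have hN4 : (4 : ℝ) ≤ N := by
    have : 4 ≤ N := by omega
    exact_mod_cast this
  -- a point of `S` below one
  obtain ⟨q, hq0, hq1, hqS⟩ : ∃ q : ℝ, 0 ≤ q ∧ q < 1 ∧ q ∈ S := by
    have hq : 2 * (N : ℝ) * (1 - (1 - 1 / (2 * N))) = 1 := by field_simp; ring
    have e1 : (1 : ℝ) / (2 * N) ≤ 1 := by
      rw [div_le_one (by positivity)]; linarith
    have e2 : (0 : ℝ) < 1 / (2 * N) := by positivity
    refine ⟨1 - 1 / (2 * N), by linarith, by linarith, by linarith, by linarith, ?_⟩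
    obtain ⟨X, Y, X0, X1, Y0, Y1, tx, ty, eX, eY⟩ :=
      xyBP_lim ha hb (p := 1 - 1 / (2 * N)) (by linarith) (by linarith)
    have c1 := one_sub_phiBP_le ha (show a ≤ N by omega) hq (by linarith) Y0 Y1
    have c2 := one_sub_phiBP_le hb (show b ≤ N by omega) hq (by linarith) X0 X1
    rw [← eX] at c1
    rw [← eY] at c2
    obtain rfl : X = 1 := by linarith
    obtain rfl : Y = 1 := by linarith
    exact ⟨tx, ty⟩
  -- a positive lower bound of `S`
  obtain ⟨ε, hε0, hεS⟩ : ∃ ε : ℝ, 0 < ε ∧ ∀ p ∈ S, ε ≤ p := by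
    have hε : 4 * (N : ℝ) ^ 2 * (1 / (4 * (N : ℝ) ^ 2)) = 1 := by field_simp
    have e2 : (0 : ℝ) < 1 / (4 * (N : ℝ) ^ 2) := by positivity
    have e3 : (1 : ℝ) / (4 * (N : ℝ) ^ 2) ≤ 1 / 4 := by
      rw [div_le_div_iff₀ (by positivity) (by norm_num)]; nlinarith
    refine ⟨1 / (4 * (N : ℝ) ^ 2), e2, ?_⟩
    intro p hp
    by_contra hlt
    push Not at hlt
    have := le_of_tendsto' hp.2.2.1 fun t =>
      (xyBP_small hθ ha hb (show a ≤ N by omega) (show b ≤ N by omega) hε hp.1 hlt.le e2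
        (by linarith) t).1
    linarith
  have hbdd : BddBelow S := ⟨ε, fun p hp => hεS p hp⟩
  have hup : ∀ p : ℝ, sInf S < p → p ≤ 1 → p ∈ S := by
    intro p hp hp1
    obtain ⟨r, hr, hrp⟩ := exists_lt_of_csInf_lt ⟨q, hqS⟩ hp
    have m := xyBP_mem ha hb (hr.1.trans hrp.le) hp1
    have k := xyBP_mono_p ha hb hr.1 hrp.le hp1
    exact ⟨hr.1.trans hrp.le, hp1,
      tendsto_of_tendsto_of_tendsto_of_le_of_le hr.2.2.1 tendsto_const_nhds
        (fun t => (k t).1) (fun t => (m t).1.2),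
      tendsto_of_tendsto_of_tendsto_of_le_of_le hr.2.2.2 tendsto_const_nhds
        (fun t => (k t).2) (fun t => (m t).2.2)⟩
  have hlow : ∀ p : ℝ, p < sInf S → p ∉ S := fun p hp h => (csInf_le hbdd h).not_gt hp
  have hpf1 : sInf S < 1 := (csInf_le hbdd hqS).trans_lt hq1
  have hpf0 : 0 < sInf S := hε0.trans_le (le_csInf ⟨q, hqS⟩ hεS)
  refine ⟨sInf S, hpf0, hpf1, fun p hp hp1 => (hup p hp hp1).2.2, ?_, ?_⟩
  · intro p hp0 hp
    have hp1 : p ≤ 1 := by linarith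
    obtain ⟨X, Y, X0, X1, Y0, Y1, tx, ty, eX, eY⟩ := xyBP_lim ha hb hp0 hp1
    have hX : X = 1 → Y = 1 := by
      rintro rfl; rw [eY, phiBP_one hb]
    have hY : Y = 1 → X = 1 := by
      rintro rfl; rw [eX, phiBP_one ha]
    have hne : ¬ (X = 1 ∧ Y = 1) := by
      rintro ⟨rfl, rfl⟩
      exact hlow p hp ⟨hp0, hp1, tx, ty⟩
    exact ⟨⟨X, lt_of_le_of_ne X1 fun h => hne ⟨h, hX h⟩, tx⟩,
      ⟨Y, lt_of_le_of_ne Y1 fun h => hne ⟨hY h, h⟩, ty⟩⟩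
  · intro hab pa pb pa0 pa1 pb0 pb1 hpa hpb
    constructor
    · by_contra h
      push Not at h
      obtain ⟨p, h1, h2⟩ := exists_between h
      have hp0 : 0 ≤ p := by linarith
      have hp1 : p ≤ 1 := by linarith
      obtain ⟨L, hL, tL⟩ := hpb.2 p hp0 h2
      have := le_of_tendsto_of_tendsto' (hup p h1 hp1).2.2.1 tL
        fun t => (sBP_le ha hab hp0 hp1 t).2.1
      linarith
    · by_contra h
      push Not at h
      obtain ⟨p, h1, h2⟩ := exists_between h
      have hp0 : 0 ≤ p := by linarith
      have hp1 : p ≤ 1 := by linarith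
      have ts := hpa.1 p h1 hp1
      have m := xyBP_mem ha hb hp0 hp1
      have k := sBP_le ha hab hp0 hp1
      exact hlow p h2 ⟨hp0, hp1,
        tendsto_of_tendsto_of_tendsto_of_le_of_le ts tendsto_const_nhds
          (fun t => (k t).1.1) (fun t => (m t).1.2),
        tendsto_of_tendsto_of_tendsto_of_le_of_le ts tendsto_const_nhds
          (fun t => (k t).1.2) (fun t => (m t).2.2)⟩
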